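/- Consider the setting of the linear problem: q_e : 𝕋_L → ℝ smooth and positive, ω₀ > 0, and smooth Q, F, G on 𝕋_L × [0,∞) satisfying ∂_s Q − ω₀ q_e(s) ∂_ψ² Q = F + ∂_ψ² G, with Q(s,ψ) → 0 as ψ → ∞. Define the zero mode Q^{(=0)}(ψ) := (1/L) ∫₀^L Q(s,ψ) ds and the nonzero-mode part Q^{(≠0)} := Q − Q^{(=0)}, and similarly G^{(=0)}. Assume the decay conditions ∫₀^L q_e(s) Q(s,ψ) ds → 0 and ∂_ψ ∫₀^L q_e(s) Q(s,ψ) ds → 0 as ψ → ∞, and ∫₀^L G(s,ψ) ds → 0 as ψ → ∞. Then for every integer m ≥ 0 there is a constant C (depending on m, L, ω₀, q_e) such that ‖⟨ψ⟩^m Q^{(=0)}‖²_{L²(ℝ₊)} ≤ C ( ‖⟨ψ⟩^m Q^{(≠0)}‖²_{L²(𝕋_L×ℝ₊)} + ‖⟨ψ⟩^{m+4} F‖²_{L²(𝕋_L×ℝ₊)} + ‖⟨ψ⟩^m G‖²_{L²(𝕋_L×ℝ₊)} ), provided the right-hand side is finite. -/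

import Mathlib

open MeasureTheory Set Function Filter

/-- `k`-th partial derivative in the tangential variable `s` of a function on
`𝕋_L × [0,∞)` (represented as a curried function `ℝ → ℝ → ℝ`). -/
noncomputable def dS (k : ℕ) (h : ℝ → ℝ → ℝ) : ℝ → ℝ → ℝ :=
  fun s ψ => iteratedDeriv k (fun s' => h s' ψ) s

/-- `j`-th partial derivative in the normal (von Mises) variable `ψ`. -/
noncomputable def dPsi (j : ℕ) (h : ℝ → ℝ → ℝ) : ℝ → ℝ → ℝ :=
  fun s ψ => iteratedDeriv j (fun ψ' => h s ψ') ψ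

/-- Squared `L²` norm over `𝕋_L × ℝ₊` (fundamental domain `(0,L] × (0,∞)`). -/
noncomputable def L2sq (L : ℝ) (h : ℝ → ℝ → ℝ) : ℝ :=
  ∫ p in Ioc (0:ℝ) L ×ˢ Ioi (0:ℝ), (h p.1 p.2) ^ 2

/-- Square-integrability over `𝕋_L × ℝ₊`. -/
def FiniteL2 (L : ℝ) (h : ℝ → ℝ → ℝ) : Prop :=
  IntegrableOn (fun p : ℝ × ℝ => (h p.1 p.2) ^ 2) (Ioc (0:ℝ) L ×ˢ Ioi (0:ℝ))

/-- The weight `⟨ψ⟩^m h`. -/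
noncomputable def wt (m : ℕ) (h : ℝ → ℝ → ℝ) : ℝ → ℝ → ℝ :=
  fun s ψ => (1 + ψ) ^ m * h s ψ

/-- Squared `X_{k,m}` norm:
`‖h‖²_{X_{k,m}} = Σ_{k'≤k} Σ_{m'≤m} (‖⟨ψ⟩^{m'}∂_s^{k'}h‖² + ‖⟨ψ⟩^{m'}∂_s^{k'+1}h‖²
+ ‖⟨ψ⟩^{m'}∂_ψ∂_s^{k'}h‖² + ‖⟨ψ⟩^{m'}∂_ψ²∂_s^{k'}h‖²)`. -/
noncomputable def XnormSq (L : ℝ) (k m : ℕ) (h : ℝ → ℝ → ℝ) : ℝ :=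
  ∑ k' ∈ Finset.range (k+1), ∑ m' ∈ Finset.range (m+1),
    (L2sq L (wt m' (dS k' h)) + L2sq L (wt m' (dS (k'+1) h))
      + L2sq L (wt m' (dPsi 1 (dS k' h))) + L2sq L (wt m' (dPsi 2 (dS k' h))))

/-- The `X_{k,m}` norm. -/
noncomputable def Xnorm (L : ℝ) (k m : ℕ) (h : ℝ → ℝ → ℝ) : ℝ :=
  Real.sqrt (XnormSq L k m h)

/-- Membership in the space `X_{k,m}`: all the defining integrands are integrable. -/
def XFinite (L : ℝ) (k m : ℕ) (h : ℝ → ℝ → ℝ) : Prop :=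
  ∀ k' ≤ k, ∀ m' ≤ m,
    FiniteL2 L (wt m' (dS k' h)) ∧ FiniteL2 L (wt m' (dS (k'+1) h))
      ∧ FiniteL2 L (wt m' (dPsi 1 (dS k' h))) ∧ FiniteL2 L (wt m' (dPsi 2 (dS k' h)))

/-- Joint smoothness of a curried function of two real variables. -/
def Smooth2 (h : ℝ → ℝ → ℝ) : Prop :=
  ContDiff ℝ (⊤ : ℕ∞) (fun p : ℝ × ℝ => h p.1 p.2)

/-- Periodicity in the first (tangential) variable. -/
def PeriodicS (L : ℝ) (h : ℝ → ℝ → ℝ) : Prop :=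
  ∀ ψ : ℝ, Function.Periodic (fun s => h s ψ) L

/-- Squared `H^n` norm of a function on `𝕋_L`. -/
noncomputable def HnormSq (L : ℝ) (n : ℕ) (b : ℝ → ℝ) : ℝ :=
  ∑ j ∈ Finset.range (n+1), ∫ s in (0:ℝ)..L, (iteratedDeriv j b s) ^ 2

theorem zm_hasDeriv {h : ℝ → ℝ → ℝ} (hh : Smooth2 h) (s ψ : ℝ) :
    HasDerivAt (fun ψ' => h s ψ') (fderiv ℝ (fun p : ℝ × ℝ => h p.1 p.2) (s, ψ) (0, 1)) ψ := by
  have h1 : HasFDerivAt (fun p : ℝ × ℝ => h p.1 p.2)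
      (fderiv ℝ (fun p : ℝ × ℝ => h p.1 p.2) (s, ψ)) (s, ψ) :=
    (ContDiff.differentiable hh (by simp)).differentiableAt.hasFDerivAt
  have h2 : HasDerivAt (fun ψ' : ℝ => (s, ψ')) ((0 : ℝ), (1 : ℝ)) ψ :=
    (hasDerivAt_const ψ s).prodMk (hasDerivAt_id ψ)
  exact h1.comp_hasDerivAt ψ h2

theorem zm_hasDerivS {h : ℝ → ℝ → ℝ} (hh : Smooth2 h) (s ψ : ℝ) :
    HasDerivAt (fun s' => h s' ψ) (fderiv ℝ (fun p : ℝ × ℝ => h p.1 p.2) (s, ψ) (1, 0)) s := by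
  have h1 : HasFDerivAt (fun p : ℝ × ℝ => h p.1 p.2)
      (fderiv ℝ (fun p : ℝ × ℝ => h p.1 p.2) (s, ψ)) (s, ψ) :=
    (ContDiff.differentiable hh (by simp)).differentiableAt.hasFDerivAt
  have h2 : HasDerivAt (fun s' : ℝ => (s', ψ)) ((1 : ℝ), (0 : ℝ)) s :=
    (hasDerivAt_id s).prodMk (hasDerivAt_const s ψ)
  exact h1.comp_hasDerivAt s h2

theorem zm_dPsi_one {h : ℝ → ℝ → ℝ} (hh : Smooth2 h) (s ψ : ℝ) :
    dPsi 1 h s ψ = fderiv ℝ (fun p : ℝ × ℝ => h p.1 p.2) (s, ψ) (0, 1) := by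
  rw [dPsi, iteratedDeriv_one]
  exact (zm_hasDeriv hh s ψ).deriv

theorem zm_dS_one {h : ℝ → ℝ → ℝ} (hh : Smooth2 h) (s ψ : ℝ) :
    dS 1 h s ψ = fderiv ℝ (fun p : ℝ × ℝ => h p.1 p.2) (s, ψ) (1, 0) := by
  rw [dS, iteratedDeriv_one]
  exact (zm_hasDerivS hh s ψ).deriv

theorem zm_smooth_dPsi {h : ℝ → ℝ → ℝ} (hh : Smooth2 h) : Smooth2 (dPsi 1 h) := by
  unfold Smooth2
  simp only [zm_dPsi_one hh]
  have h1 : ContDiff ℝ (⊤ : ℕ∞) (fderiv ℝ (fun p : ℝ × ℝ => h p.1 p.2)) :=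
    ContDiff.fderiv_right hh (by simp)
  exact h1.clm_apply contDiff_const

theorem zm_smooth_dS {h : ℝ → ℝ → ℝ} (hh : Smooth2 h) : Smooth2 (dS 1 h) := by
  unfold Smooth2
  simp only [zm_dS_one hh]
  have h1 : ContDiff ℝ (⊤ : ℕ∞) (fderiv ℝ (fun p : ℝ × ℝ => h p.1 p.2)) :=
    ContDiff.fderiv_right hh (by simp)
  exact h1.clm_apply contDiff_const

theorem zm_dPsi_two (h : ℝ → ℝ → ℝ) : dPsi 2 h = dPsi 1 (dPsi 1 h) := by
  funext s ψ
  simp only [dPsi, iteratedDeriv_one]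
  rw [iteratedDeriv_succ, iteratedDeriv_one]

theorem zm_hasDeriv' {h : ℝ → ℝ → ℝ} (hh : Smooth2 h) (s ψ : ℝ) :
    HasDerivAt (fun ψ' => h s ψ') (dPsi 1 h s ψ) ψ := by
  rw [zm_dPsi_one hh]; exact zm_hasDeriv hh s ψ

theorem zm_cont {h : ℝ → ℝ → ℝ} (hh : Smooth2 h) : Continuous (fun p : ℝ × ℝ => h p.1 p.2) :=
  ContDiff.continuous hh

theorem zm_contS {h : ℝ → ℝ → ℝ} (hh : Continuous (fun p : ℝ × ℝ => h p.1 p.2)) (ψ : ℝ) :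
    Continuous (fun s => h s ψ) :=
  hh.comp (by fun_prop : Continuous fun s : ℝ => (s, ψ))

theorem zm_cont_int {h : ℝ → ℝ → ℝ} (hh : Continuous (fun p : ℝ × ℝ => h p.1 p.2)) (L : ℝ) :
    Continuous (fun ψ => ∫ s in (0:ℝ)..L, h s ψ) := by
  apply intervalIntegral.continuous_parametric_intervalIntegral_of_continuous'
  exact hh.comp continuous_swap

/-- Differentiation under the integral sign. -/
theorem zm_hasDeriv_int {h : ℝ → ℝ → ℝ} (hh : Smooth2 h) (L ψ : ℝ) :
    HasDerivAt (fun ψ' => ∫ s in (0:ℝ)..L, h s ψ') (∫ s in (0:ℝ)..L, dPsi 1 h s ψ) ψ := by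
  have hc := zm_cont (zm_smooth_dPsi hh)
  have hK : IsCompact (uIcc 0 L ×ˢ Icc (ψ - 1) (ψ + 1)) := isCompact_uIcc.prod isCompact_Icc
  obtain ⟨C, hC⟩ := hK.exists_bound_of_continuousOn hc.continuousOn
  refine (intervalIntegral.hasDerivAt_integral_of_dominated_loc_of_deriv_le
    (F := fun ψ' s => h s ψ') (F' := fun ψ' s => dPsi 1 h s ψ') (bound := fun _ => C)
    (s := Icc (ψ - 1) (ψ + 1)) (Icc_mem_nhds (by linarith) (by linarith)) ?_ ?_ ?_ ?_ ?_ ?_).2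
  · exact Eventually.of_forall fun x => (zm_contS (zm_cont hh) x).aestronglyMeasurable
  · exact (zm_contS (zm_cont hh) ψ).intervalIntegrable _ _
  · exact (zm_contS hc ψ).aestronglyMeasurable
  · refine Eventually.of_forall fun t ht x hx => hC (t, x) ⟨uIoc_subset_uIcc ht, hx⟩
  · exact intervalIntegrable_const
  · exact Eventually.of_forall fun t ht x hx => zm_hasDeriv' hh t x

/-- Cauchy-Schwarz. -/
theorem zm_cs {α : Type*} [MeasurableSpace α] {μ : Measure α} {f g : α → ℝ}
    (hf : Integrable (fun x => f x ^ 2) μ) (hg : Integrable (fun x => g x ^ 2) μ)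
    (hfg : Integrable (fun x => f x * g x) μ) :
    (∫ x, f x * g x ∂μ) ^ 2 ≤ (∫ x, f x ^ 2 ∂μ) * ∫ x, g x ^ 2 ∂μ := by
  have key : ∀ x : ℝ, 0 ≤ (∫ y, f y ^ 2 ∂μ) * (x * x) + (2 * ∫ y, f y * g y ∂μ) * x
      + ∫ y, g y ^ 2 ∂μ := by
    intro x
    have h0 : 0 ≤ ∫ y, (x * f y + g y) ^ 2 ∂μ := integral_nonneg fun y => sq_nonneg _
    have h1 : ∫ y, (x * f y + g y) ^ 2 ∂μ
        = ∫ y, ((x * x) * f y ^ 2 + (2 * x) * (f y * g y)) + g y ^ 2 ∂μ := by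
      congr 1; funext y; ring
    have h2 : Integrable (fun y => (x * x) * f y ^ 2 + (2 * x) * (f y * g y)) μ :=
      (hf.const_mul _).add (hfg.const_mul _)
    rw [h1, integral_add h2 hg,
      integral_add (hf.const_mul _) (hfg.const_mul _), integral_const_mul,
      integral_const_mul] at h0
    linarith
  have := discrim_le_zero key
  unfold discrim at this
  nlinarith

/-- Weighted `L²` bound for tangential averages. -/
theorem zm_avg (L : ℝ) (hL : 0 < L) (k : ℕ) (b : ℝ → ℝ) (hb : Continuous b) (h : ℝ → ℝ → ℝ)
    (hh : Continuous (fun p : ℝ × ℝ => h p.1 p.2)) (hfin : FiniteL2 L (wt k h)) :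
    IntegrableOn (fun ψ => ((1+ψ)^k * ∫ s in (0:ℝ)..L, b s * h s ψ) ^ 2) (Ioi 0) ∧
    ∫ ψ in Ioi (0:ℝ), ((1+ψ)^k * ∫ s in (0:ℝ)..L, b s * h s ψ) ^ 2
      ≤ (∫ s in (0:ℝ)..L, b s ^ 2) * L2sq L (wt k h) := by
  have hfin' : Integrable (fun p : ℝ × ℝ => (wt k h p.1 p.2) ^ 2)
      ((volume.restrict (Ioc (0:ℝ) L)).prod (volume.restrict (Ioi (0:ℝ)))) := by
    rw [Measure.prod_restrict]; exact hfin
  have hI := hfin'.integral_prod_right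
  have hE : L2sq L (wt k h) = ∫ ψ in Ioi (0:ℝ), ∫ s in Ioc (0:ℝ) L, (wt k h s ψ) ^ 2 := by
    rw [← integral_prod_symm _ hfin', Measure.prod_restrict]; rfl
  have hbh : Continuous (fun p : ℝ × ℝ => b p.1 * h p.1 p.2) := by fun_prop
  have hcont : Continuous (fun ψ => ((1+ψ)^k * ∫ s in (0:ℝ)..L, b s * h s ψ) ^ 2) := by
    have := zm_cont_int (h := fun s ψ => b s * h s ψ) hbh L
    fun_prop
  have hpt : ∀ ψ, ((1+ψ)^k * ∫ s in (0:ℝ)..L, b s * h s ψ) ^ 2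
      ≤ (∫ s in (0:ℝ)..L, b s ^ 2) * ∫ s in Ioc (0:ℝ) L, (wt k h s ψ) ^ 2 := by
    intro ψ
    have hc := zm_contS hh ψ
    have i1 : ∀ u : ℝ → ℝ, Continuous u → Integrable u (volume.restrict (Ioc (0:ℝ) L)) := by
      intro u hu
      exact (hu.integrableOn_Icc).mono_set Ioc_subset_Icc_self
    have := zm_cs (μ := volume.restrict (Ioc (0:ℝ) L)) (f := b) (g := fun s => wt k h s ψ)
      (i1 _ (by fun_prop)) (i1 _ (by unfold wt; fun_prop)) (i1 _ (by unfold wt; fun_prop))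
    rw [intervalIntegral.integral_of_le hL.le, intervalIntegral.integral_of_le hL.le,
      ← integral_const_mul]
    refine le_trans (le_of_eq ?_) this
    congr 2; funext s; unfold wt; ring
  have hint : IntegrableOn (fun ψ => ((1+ψ)^k * ∫ s in (0:ℝ)..L, b s * h s ψ) ^ 2) (Ioi 0) := by
    refine Integrable.mono' (hI.const_mul (∫ s in (0:ℝ)..L, b s ^ 2))
      hcont.aestronglyMeasurable (Eventually.of_forall fun ψ => ?_)
    rw [Real.norm_of_nonneg (sq_nonneg _)]
    exact hpt ψ
  refine ⟨hint, ?_⟩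
  rw [hE, ← integral_const_mul]
  exact integral_mono hint (hI.const_mul _) hpt

/-- Decay for a second order equation. -/
theorem zm_ode (n : ℕ) (H H' f : ℝ → ℝ) (hH : ∀ x > 0, HasDerivAt H (H' x) x)
    (hH' : ∀ x > 0, HasDerivAt H' (-f x) x) (hf : Continuous f)
    (hint : IntegrableOn (fun t => (1+t)^(n+2) * |f t|) (Ioi 0))
    (hlim : Tendsto H atTop (nhds 0)) (x : ℝ) (hx : 0 < x) :
    |H x| ≤ (∫ t in Ioi (0:ℝ), (1+t)^(n+2) * |f t|) * ((1+x)^(n+1))⁻¹ := by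
  set M := ∫ t in Ioi (0:ℝ), (1+t)^(n+2) * |f t| with hM
  have hM0 : 0 ≤ M := by
    refine setIntegral_nonneg measurableSet_Ioi fun t ht => ?_
    have : (0:ℝ) < t := ht
    positivity
  -- first step: oscillation of the derivative
  have step1 : ∀ x > 0, ∀ y ≥ x, |H' y - H' x| ≤ M * ((1+x)^(n+2))⁻¹ := by
    intro x hx y hy
    have e1 : ∫ t in x..y, -f t = H' y - H' x := by
      apply intervalIntegral.integral_eq_sub_of_hasDerivAt
      · intro t ht
        rw [uIcc_of_le hy] at ht
        exact hH' t (hx.trans_le ht.1)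
      · exact hf.neg.intervalIntegrable _ _
    rw [← e1, ← div_eq_mul_inv, le_div_iff₀ (by positivity)]
    have e2 : |∫ t in x..y, -f t| ≤ ∫ t in x..y, |f t| := by
      have := intervalIntegral.abs_integral_le_integral_abs (f := fun t => -f t) (μ := volume) hy
      simpa using this
    calc |∫ t in x..y, -f t| * (1+x)^(n+2) ≤ (∫ t in x..y, |f t|) * (1+x)^(n+2) := by gcongr
      _ = ∫ t in x..y, (1+x)^(n+2) * |f t| := by
        rw [intervalIntegral.integral_const_mul, mul_comm]
      _ ≤ ∫ t in x..y, (1+t)^(n+2) * |f t| := by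
        apply intervalIntegral.integral_mono_on hy
        · exact (by fun_prop : Continuous _).intervalIntegrable _ _
        · exact (by fun_prop : Continuous _).intervalIntegrable _ _
        · intro t ht
          have := ht.1
          gcongr
      _ ≤ M := by
        rw [intervalIntegral.integral_of_le hy]
        refine setIntegral_mono_set hint ?_ ?_
        · refine (ae_restrict_iff' measurableSet_Ioi).2 (Eventually.of_forall fun t ht => ?_)
          have : (0:ℝ) < t := ht
          simp only [Pi.zero_apply]
          positivity
        · have hsub : Ioc x y ⊆ Ioi 0 := fun t ht => hx.trans ht.1
          exact hsub.eventuallyLE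
  -- second step: bound of the derivative
  have step2 : ∀ x > 0, |H' x| ≤ M * ((1+x)^(n+2))⁻¹ := by
    intro x hx
    have hb : ∀ y > x, |H' x| ≤ M * ((1+x)^(n+2))⁻¹ + |(H y - H x) / (y - x)| := by
      intro y hy
      obtain ⟨c, hc, hc'⟩ := exists_hasDerivAt_eq_slope H H' hy
        (fun t ht => (hH t (hx.trans_le ht.1)).continuousAt.continuousWithinAt)
        (fun t ht => hH t (hx.trans ht.1))
      rw [← hc']
      have h1 := step1 x hx c hc.1.le
      have h2 : |H' x| ≤ |H' c - H' x| + |H' c| := by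
        have := abs_sub (H' c) (H' c - H' x)
        have e : H' c - (H' c - H' x) = H' x := by ring
        rw [e] at this
        linarith
      linarith
    have ht : Tendsto (fun y => M * ((1+x)^(n+2))⁻¹ + |(H y - H x) / (y - x)|) atTop
        (nhds (M * ((1+x)^(n+2))⁻¹ + |0|)) := by
      refine tendsto_const_nhds.add (Tendsto.abs ?_)
      exact (hlim.sub_const (H x)).div_atTop (tendsto_atTop_add_const_right _ (-x) tendsto_id)
    rw [abs_zero, add_zero] at ht
    exact ge_of_tendsto ht ((eventually_gt_atTop x).mono hb)
  -- third step
  have hφ : ∀ t > 0, HasDerivAt (fun t : ℝ => M * ((1+t)^(n+1))⁻¹)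
      (-((n+1) * (M * ((1+t)^(n+2))⁻¹))) t := by
    intro t ht
    have h1 : HasDerivAt (fun t : ℝ => (1+t)^(n+1)) (((n+1 : ℕ) : ℝ) * (1+t)^n * 1) t :=
      ((hasDerivAt_id t).const_add 1).pow (n+1)
    have h2 := (h1.inv (by positivity)).const_mul M
    refine h2.congr_deriv ?_
    push_cast
    have h3 : (1 + t) ≠ 0 := by positivity
    field_simp
    try ring
  have hφlim : Tendsto (fun t : ℝ => M * ((1+t)^(n+1))⁻¹) atTop (nhds 0) := by
    have : Tendsto (fun t : ℝ => (1+t)^(n+1)) atTop atTop :=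
      (tendsto_pow_atTop (by omega)).comp (tendsto_atTop_add_const_left _ 1 tendsto_id)
    simpa using this.inv_tendsto_atTop.const_mul M
  have main : ∀ σ : ℝ, |σ| = 1 → σ * H x ≤ M * ((1+x)^(n+1))⁻¹ := by
    intro σ hσ
    have hd : ∀ t > 0, HasDerivAt (fun t => σ * H t - M * ((1+t)^(n+1))⁻¹)
        (σ * H' t - -((n+1) * (M * ((1+t)^(n+2))⁻¹))) t :=
      fun t ht => ((hH t ht).const_mul σ).sub (hφ t ht)
    have hmono : MonotoneOn (fun t => σ * H t - M * ((1+t)^(n+1))⁻¹) (Ioi 0) := by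
      apply monotoneOn_of_deriv_nonneg (convex_Ioi 0)
      · exact fun t ht => (hd t ht).continuousAt.continuousWithinAt
      · rw [interior_Ioi]
        exact fun t ht => (hd t ht).differentiableAt.differentiableWithinAt
      · rw [interior_Ioi]
        intro t ht
        rw [(hd t ht).deriv]
        have h1 := step2 t ht
        have h2 : -(σ * H' t) ≤ |H' t| := by
          have := neg_abs_le (σ * H' t)
          rw [abs_mul, hσ, one_mul] at this
          linarith
        have ht' : (0:ℝ) < t := ht
        have h3 : 0 ≤ (n:ℝ) * (M * ((1+t)^(n+2))⁻¹) := by positivity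
        linarith
    have hl : Tendsto (fun t => σ * H t - M * ((1+t)^(n+1))⁻¹) atTop (nhds 0) := by
      simpa using (hlim.const_mul σ).sub hφlim
    have := ge_of_tendsto hl ((eventually_ge_atTop x).mono
      fun y hy => hmono hx (hx.trans_le hy) hy)
    simp only at this
    linarith
  rw [abs_le]
  constructor
  · have := main (-1) (by simp); linarith
  · have := main 1 (by simp); linarith

theorem zm_int_weight (k : ℕ) (hk : 2 ≤ k) :
    IntegrableOn (fun t : ℝ => (((1+t)^k)⁻¹)) (Ioi 0) := by
  have hk' : (2:ℝ) ≤ k := by exact_mod_cast hk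
  have := integrableOn_add_rpow_Ioi_of_lt (a := -(k:ℝ)) (c := 0) (m := 1) (by linarith) (by norm_num)
  refine this.congr_fun (fun t ht => ?_) measurableSet_Ioi
  have ht' : (0:ℝ) < t := ht
  simp only
  rw [Real.rpow_neg (by linarith), Real.rpow_natCast, add_comm]

/-- **The zero-mode estimate for the linear Prandtl problem.** -/
theorem linear_prandtl_zero_mode_estimate
    (L : ℝ) (hL : 0 < L)
    (q_e : ℝ → ℝ) (hqe : ContDiff ℝ (⊤ : ℕ∞) q_e) (hqeper : Function.Periodic q_e L)
    (hqepos : ∀ s, 0 < q_e s)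
    (ω₀ : ℝ) (hω₀ : 0 < ω₀) (m : ℕ) :
    ∃ C > (0:ℝ), ∀ Q F G : ℝ → ℝ → ℝ,
      Smooth2 Q → PeriodicS L Q → Smooth2 F → PeriodicS L F →
      Smooth2 G → PeriodicS L G →
      (∀ s : ℝ, ∀ ψ > (0:ℝ),
        dS 1 Q s ψ - ω₀ * q_e s * dPsi 2 Q s ψ = F s ψ + dPsi 2 G s ψ) →
      (∀ s : ℝ, Tendsto (fun ψ => Q s ψ) atTop (nhds 0)) →
      -- decay conditions
      Tendsto (fun ψ => ∫ s in (0:ℝ)..L, q_e s * Q s ψ) atTop (nhds 0) →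
      Tendsto (fun ψ => deriv (fun ψ' => ∫ s in (0:ℝ)..L, q_e s * Q s ψ') ψ)
        atTop (nhds 0) →
      Tendsto (fun ψ => ∫ s in (0:ℝ)..L, G s ψ) atTop (nhds 0) →
      -- finiteness of the right-hand side
      FiniteL2 L (wt m (fun s ψ => Q s ψ - (1/L) * ∫ s' in (0:ℝ)..L, Q s' ψ)) →
      FiniteL2 L (wt (m+4) F) → FiniteL2 L (wt m G) →
      (∫ ψ in Ioi (0:ℝ), ((1+ψ)^m * ((1/L) * ∫ s in (0:ℝ)..L, Q s ψ)) ^ 2)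
        ≤ C * (L2sq L (wt m (fun s ψ => Q s ψ - (1/L) * ∫ s' in (0:ℝ)..L, Q s' ψ))
            + L2sq L (wt (m+4) F) + L2sq L (wt m G)) := by
  have hqc : Continuous q_e := hqe.continuous
  set q := ∫ s in (0:ℝ)..L, q_e s with hq
  have hq0 : 0 < q :=
    intervalIntegral.intervalIntegral_pos_of_pos (hqc.intervalIntegrable _ _) hqepos hL
  set I2 := ∫ t in Ioi (0:ℝ), ((1+t)^2)⁻¹ with hI2
  set I4 := ∫ t in Ioi (0:ℝ), (((1+t)^2)⁻¹)^2 with hI4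
  set q2 := ∫ s in (0:ℝ)..L, q_e s ^ 2 with hq2
  have hI2n : 0 ≤ I2 := integral_nonneg fun t => by positivity
  have hI4n : 0 ≤ I4 := integral_nonneg fun t => by positivity
  have hq2n : 0 ≤ q2 := intervalIntegral.integral_nonneg hL.le fun t _ => by positivity
  refine ⟨3 / q^2 * (L * I4 * I2 / ω₀^2 + q2 + L / ω₀^2) , by positivity, ?_⟩
  intro Q F G hQ hQp hF hFp hG hGp heq hQlim hAlim _ hGlim fQ fF fG
  have hQc := zm_cont hQ
  have hFc := zm_cont hF
  have hGc := zm_cont hG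
  -- the combined quantity
  set P : ℝ → ℝ → ℝ := fun s ψ => ω₀ * q_e s * Q s ψ + G s ψ with hP
  have hPs : Smooth2 P := by
    have h1 : ContDiff ℝ (⊤ : ℕ∞) (fun p : ℝ × ℝ => q_e p.1) := hqe.comp contDiff_fst
    exact ((contDiff_const.mul h1).mul hQ).add hG
  set f : ℝ → ℝ := fun ψ => ∫ s in (0:ℝ)..L, F s ψ with hf
  set g : ℝ → ℝ := fun ψ => ∫ s in (0:ℝ)..L, G s ψ with hg
  set A : ℝ → ℝ := fun ψ => ∫ s in (0:ℝ)..L, q_e s * Q s ψ with hA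
  set H : ℝ → ℝ := fun ψ => ∫ s in (0:ℝ)..L, P s ψ with hH
  set Z : ℝ → ℝ := fun ψ => (1/L) * ∫ s in (0:ℝ)..L, Q s ψ with hZ
  have hfc : Continuous f := zm_cont_int hFc L
  have hZc : Continuous Z := continuous_const.mul (zm_cont_int hQc L)
  have hHA : ∀ ψ, H ψ = ω₀ * A ψ + g ψ := by
    intro ψ
    have c1 := zm_contS hQc ψ
    have c2 := zm_contS hGc ψ
    simp only [hH, hP, hA, hg]
    rw [intervalIntegral.integral_add ((by fun_prop : Continuous _).intervalIntegrable _ _)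
      (c2.intervalIntegrable _ _), ← intervalIntegral.integral_const_mul]
    simp only [mul_assoc]
  have hHlim : Tendsto H atTop (nhds 0) := by
    have : H = fun ψ => ω₀ * A ψ + g ψ := funext hHA
    rw [this]
    simpa using (hAlim.const_mul ω₀).add hGlim
  have hd1 : ∀ x, HasDerivAt H (∫ s in (0:ℝ)..L, dPsi 1 P s x) x := zm_hasDeriv_int hPs L
  have hP1 : dPsi 1 P = fun s ψ => ω₀ * q_e s * dPsi 1 Q s ψ + dPsi 1 G s ψ := by
    funext s ψ
    have h1 := ((zm_hasDeriv' hQ s ψ).const_mul (ω₀ * q_e s)).add (zm_hasDeriv' hG s ψ)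
    exact (zm_hasDeriv' hPs s ψ).unique h1
  have hP2 : ∀ s ψ, dPsi 1 (dPsi 1 P) s ψ = ω₀ * q_e s * dPsi 2 Q s ψ + dPsi 2 G s ψ := by
    intro s ψ
    rw [zm_dPsi_two, zm_dPsi_two]
    have h1 := ((zm_hasDeriv' (zm_smooth_dPsi hQ) s ψ).const_mul (ω₀ * q_e s)).add
      (zm_hasDeriv' (zm_smooth_dPsi hG) s ψ)
    have h2 := zm_hasDeriv' (zm_smooth_dPsi hPs) s ψ
    refine h2.unique ?_
    rw [hP1]
    exact h1
  have hd2 : ∀ x > 0, HasDerivAt (fun y => ∫ s in (0:ℝ)..L, dPsi 1 P s y) (-f x) x := by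
    intro x hx
    refine (zm_hasDeriv_int (zm_smooth_dPsi hPs) L x).congr_deriv ?_
    have e1 : ∀ s, dPsi 1 (dPsi 1 P) s x = dS 1 Q s x - F s x := by
      intro s
      rw [hP2]
      linarith [heq s x hx]
    have c1 := zm_contS (zm_cont (zm_smooth_dS hQ)) x
    have c2 := zm_contS hFc x
    simp only [e1]
    rw [intervalIntegral.integral_sub (c1.intervalIntegrable _ _) (c2.intervalIntegrable _ _)]
    have e2 : ∫ s in (0:ℝ)..L, dS 1 Q s x = Q L x - Q 0 x := by
      apply intervalIntegral.integral_eq_sub_of_hasDerivAt (f := fun s => Q s x)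
      · intro s _
        rw [zm_dS_one hQ]
        exact zm_hasDerivS hQ s x
      · exact c1.intervalIntegrable _ _
    have e3 : Q L x = Q 0 x := by simpa using hQp x 0
    rw [e2, e3]
    simp [hf]
  -- averages
  obtain ⟨iF, bF⟩ := zm_avg L hL (m+4) (fun _ => 1) continuous_const F hFc fF
  obtain ⟨iG, bG⟩ := zm_avg L hL m (fun _ => 1) continuous_const G hGc fG
  have hNc : Continuous (fun p : ℝ × ℝ => Q p.1 p.2 - Z p.2) :=
    hQc.sub (hZc.comp continuous_snd)
  obtain ⟨iN, bN⟩ := zm_avg L hL m q_e hqc (fun s ψ => Q s ψ - Z ψ) hNc fQ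
  simp only [one_mul, one_pow, intervalIntegral.integral_const, sub_zero, smul_eq_mul, mul_one]
    at iF bF iG bG
  set NQ := L2sq L (wt m (fun s ψ => Q s ψ - Z ψ)) with hNQ
  set NF := L2sq L (wt (m+4) F) with hNF
  set NG := L2sq L (wt m G) with hNG
  have hNQn : 0 ≤ NQ := integral_nonneg fun p => sq_nonneg _
  have hNFn : 0 ≤ NF := integral_nonneg fun p => sq_nonneg _
  have hNGn : 0 ≤ NG := integral_nonneg fun p => sq_nonneg _
  -- the `F` contribution
  have w2 := zm_int_weight 2 le_rfl
  have w4 : IntegrableOn (fun t : ℝ => (((1+t)^2)⁻¹)^2) (Ioi 0) := by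
    have := zm_int_weight 4 (by norm_num)
    refine this.congr_fun (fun t _ => ?_) measurableSet_Ioi
    simp only
    rw [inv_pow, ← pow_mul]
  have epr : ∀ t ∈ Ioi (0:ℝ), ((1+t)^(m+4) * |f t|) * ((1+t)^2)⁻¹ = (1+t)^(m+2) * |f t| := by
    intro t ht
    have ht' : (0:ℝ) < t := ht
    have : (1+t) ≠ 0 := by positivity
    field_simp
    try ring
  have iF' : IntegrableOn (fun t => ((1+t)^(m+4) * |f t|)^2) (Ioi 0) := by
    refine iF.congr_fun (fun t _ => ?_) measurableSet_Ioi
    simp only [mul_pow, sq_abs]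
    rfl
  have iFc : Continuous (fun t => (1+t)^(m+2) * |f t|) := by fun_prop
  have iM : IntegrableOn (fun t => (1+t)^(m+2) * |f t|) (Ioi 0) := by
    refine Integrable.mono' (iF'.add w4) iFc.aestronglyMeasurable ?_
    refine (ae_restrict_iff' measurableSet_Ioi).2 (Eventually.of_forall fun t ht => ?_)
    have ht' : (0:ℝ) < t := ht
    rw [Real.norm_of_nonneg (by positivity), ← epr t ht]
    simp only [Pi.add_apply]
    nlinarith [sq_nonneg ((1+t)^(m+4) * |f t| - ((1+t)^2)⁻¹),
      sq_nonneg ((1+t)^(m+4) * |f t| + ((1+t)^2)⁻¹)]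
  set M := ∫ t in Ioi (0:ℝ), (1+t)^(m+2) * |f t| with hM
  have hMM : M^2 ≤ L * I4 * NF := by
    have h1 := zm_cs (μ := volume.restrict (Ioi (0:ℝ))) (f := fun t => (1+t)^(m+4) * |f t|)
      (g := fun t => ((1+t)^2)⁻¹) iF' w4
      (iM.congr_fun (fun t ht => (epr t ht).symm) measurableSet_Ioi)
    rw [setIntegral_congr_fun measurableSet_Ioi epr] at h1
    have h2 : ∫ t in Ioi (0:ℝ), ((1+t)^(m+4) * |f t|)^2 ≤ L * NF := by
      refine le_trans (le_of_eq ?_) bF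
      refine setIntegral_congr_fun measurableSet_Ioi fun t _ => ?_
      simp only [mul_pow, sq_abs]
      rfl
    calc M^2 ≤ _ := h1
      _ ≤ (L * NF) * I4 := mul_le_mul_of_nonneg_right h2 hI4n
      _ = L * I4 * NF := by ring
  have hode := zm_ode m H _ f (fun x _ => hd1 x) hd2 hfc iM hHlim
  -- pointwise bound
  have hB : ∀ ψ, q * Z ψ = (H ψ - g ψ) / ω₀ - ∫ s in (0:ℝ)..L, q_e s * (Q s ψ - Z ψ) := by
    intro ψ
    have c1 := zm_contS hQc ψ
    rw [hHA]
    have e1 : ∫ s in (0:ℝ)..L, q_e s * (Q s ψ - Z ψ) = A ψ - q * Z ψ := by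
      simp only [mul_sub]
      rw [intervalIntegral.integral_sub ((by fun_prop : Continuous _).intervalIntegrable _ _)
        ((by fun_prop : Continuous _).intervalIntegrable _ _),
        intervalIntegral.integral_mul_const]
    rw [e1]
    field_simp
    ring
  have hpt : ∀ ψ ∈ Ioi (0:ℝ), ((1+ψ)^m * Z ψ)^2 ≤ 3 / q^2 * (M^2 / ω₀^2 * ((1+ψ)^2)⁻¹
      + ((1+ψ)^m * ∫ s in (0:ℝ)..L, q_e s * (Q s ψ - Z ψ))^2
      + ((1+ψ)^m * g ψ)^2 / ω₀^2) := by
    intro ψ hψ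
    have hψ' : (0:ℝ) < ψ := hψ
    have h1 := hode ψ hψ'
    have h2 : ((1+ψ)^m * H ψ)^2 ≤ M^2 * ((1+ψ)^2)⁻¹ := by
      have h3 : |(1+ψ)^m * H ψ| ≤ M * (1+ψ)⁻¹ := by
        rw [abs_mul, abs_of_nonneg (by positivity : 0 ≤ (1+ψ)^m)]
        calc (1+ψ)^m * |H ψ| ≤ (1+ψ)^m * (M * ((1+ψ)^(m+1))⁻¹) := by gcongr
          _ = M * (1+ψ)⁻¹ := by
            have : (1+ψ) ≠ 0 := by positivity
            field_simp
            try ring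
      calc ((1+ψ)^m * H ψ)^2 = |(1+ψ)^m * H ψ|^2 := (sq_abs _).symm
        _ ≤ (M * (1+ψ)⁻¹)^2 := by gcongr
        _ = M^2 * ((1+ψ)^2)⁻¹ := by rw [mul_pow, inv_pow]
    have h4 : (1+ψ)^m * Z ψ = ((1+ψ)^m * H ψ / ω₀ - (1+ψ)^m * g ψ / ω₀
        - (1+ψ)^m * ∫ s in (0:ℝ)..L, q_e s * (Q s ψ - Z ψ)) / q := by
      rw [eq_div_iff hq0.ne']
      have := hB ψ
      calc (1+ψ)^m * Z ψ * q = (1+ψ)^m * (q * Z ψ) := by ring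
        _ = _ := by rw [this]; ring
    rw [h4]
    generalize ((1+ψ)^m * ∫ s in (0:ℝ)..L, q_e s * (Q s ψ - Z ψ)) = c
    generalize (1+ψ)^m * g ψ = b at *
    generalize (1+ψ)^m * H ψ = a at *
    rw [div_pow, div_mul_eq_mul_div]
    gcongr
    have h5 : (a/ω₀)^2 ≤ M^2 / ω₀^2 * ((1+ψ)^2)⁻¹ := by
      rw [div_pow, div_mul_eq_mul_div]
      gcongr
    rw [← div_pow b]
    nlinarith [sq_nonneg (a/ω₀ + b/ω₀), sq_nonneg (a/ω₀ + c), sq_nonneg (b/ω₀ - c)]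
  have j1 := w2.const_mul (M^2 / ω₀^2)
  have j3 := iG.div_const (ω₀^2)
  have j12 := j1.add iN
  calc ∫ ψ in Ioi (0:ℝ), ((1+ψ)^m * Z ψ)^2
      ≤ ∫ ψ in Ioi (0:ℝ), 3 / q^2 * (M^2 / ω₀^2 * ((1+ψ)^2)⁻¹
      + ((1+ψ)^m * ∫ s in (0:ℝ)..L, q_e s * (Q s ψ - Z ψ))^2
      + ((1+ψ)^m * g ψ)^2 / ω₀^2) := by
        refine integral_mono_of_nonneg ?_ ((j12.add j3).const_mul _) ?_
        · exact Eventually.of_forall fun ψ => sq_nonneg ((1+ψ)^m * Z ψ)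
        exact (ae_restrict_iff' measurableSet_Ioi).2 (Eventually.of_forall hpt)
    _ = 3 / q^2 * (M^2 / ω₀^2 * I2
      + (∫ ψ in Ioi (0:ℝ), ((1+ψ)^m * ∫ s in (0:ℝ)..L, q_e s * (Q s ψ - Z ψ))^2)
      + (∫ ψ in Ioi (0:ℝ), ((1+ψ)^m * g ψ)^2) / ω₀^2) := by
        rw [integral_const_mul]
        congr 1
        refine (integral_add j12 j3).trans ?_
        congr 1
        · refine (integral_add j1 iN).trans ?_
          congr 1
          exact integral_const_mul _ _
        · exact integral_div _ _
    _ ≤ 3 / q^2 * ((L * I4 * NF) / ω₀^2 * I2 + q2 * NQ + (L * NG) / ω₀^2) := by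
        gcongr
    _ ≤ 3 / q^2 * (L * I4 * I2 / ω₀^2 + q2 + L / ω₀^2) * (NQ + NF + NG) := by
        rw [mul_assoc (3 / q^2)]
        have a0 : 0 ≤ 3 / q^2 := by positivity
        refine mul_le_mul_of_nonneg_left ?_ a0
        have a1 : 0 ≤ L * I4 * I2 / ω₀^2 := by positivity
        have a2 : 0 ≤ L / ω₀^2 := by positivity
        have a3 : (L * I4 * NF) / ω₀^2 * I2 = L * I4 * I2 / ω₀^2 * NF := by ring
        have a4 : (L * NG) / ω₀^2 = L / ω₀^2 * NG := by ring
        rw [a3, a4]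
        generalize L * I4 * I2 / ω₀^2 = a at *
        generalize L / ω₀^2 = b at *
        nlinarith [mul_nonneg a1 hNQn, mul_nonneg a1 hNGn, mul_nonneg a2 hNQn,
          mul_nonneg a2 hNFn, mul_nonneg hq2n hNFn, mul_nonneg hq2n hNGn]
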